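/- Let a_1,...,a_n ∈ F_q be pairwise distinct. Then the (n,1,1) convolutional code with encoder G(z) = (1,1,...,1) + (a_1,...,a_n)z is MDP, i.e., d_0^c = n and d_1^c = 2(n−1)+1 = 2n−1. Conversely, if a_i = a_j for some i ≠ j, the code is not MDP. -/

import Mathlib

open Polynomial Matrix

noncomputable def wtTrunc {F : Type*} [Field F] {n : ℕ} (j : ℕ)
    (v : Fin n → Polynomial F) : ℕ :=
  {p : ℕ × Fin n | p.1 ≤ j ∧ (v p.2).coeff p.1 ≠ 0}.ncard

noncomputable def wtFull {F : Type*} [Field F] {n : ℕ} (v : Fin n → Polynomial F) : ℕ :=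
  {p : ℕ × Fin n | (v p.2).coeff p.1 ≠ 0}.ncard

noncomputable def colDist {F : Type*} [Field F] {n : ℕ}
    (C : Submodule (Polynomial F) (Fin n → Polynomial F)) (j : ℕ) : ℕ :=
  sInf {w | ∃ v ∈ C, (fun t => (v t).coeff 0) ≠ (0 : Fin n → F) ∧ w = wtTrunc j v}

noncomputable def freeDist {F : Type*} [Field F] {n : ℕ}
    (C : Submodule (Polynomial F) (Fin n → Polynomial F)) : ℕ :=
  sInf {w | ∃ v ∈ C, v ≠ 0 ∧ w = wtFull v}

def IsEncoder {F : Type*} [Field F] {k n : ℕ}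
    (C : Submodule (Polynomial F) (Fin n → Polynomial F))
    (G : Matrix (Fin k) (Fin n) (Polynomial F)) : Prop :=
  LinearIndependent (Polynomial F) (fun i : Fin k => fun t => G i t) ∧
    Submodule.span (Polynomial F) (Set.range (fun i : Fin k => fun t => G i t)) = C

def IsDelayFree {F : Type*} [Field F] {k n : ℕ}
    (G : Matrix (Fin k) (Fin n) (Polynomial F)) : Prop :=
  LinearIndependent F (fun i : Fin k => fun t => (G i t).coeff 0)

noncomputable def codeDegree {F : Type*} [Field F] {k n : ℕ}
    (G : Matrix (Fin k) (Fin n) (Polynomial F)) : ℕ :=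
  Finset.univ.sup fun φ : Fin k → Fin n => ((G.submatrix id φ).det).natDegree

noncomputable def rowDegSum {F : Type*} [Field F] {k n : ℕ}
    (G : Matrix (Fin k) (Fin n) (Polynomial F)) : ℕ :=
  ∑ i : Fin k, Finset.univ.sup fun t : Fin n => (G i t).natDegree

noncomputable def Gcoeff {F : Type*} [Field F] {k n : ℕ}
    (G : Matrix (Fin k) (Fin n) (Polynomial F)) (i : ℕ) : Matrix (Fin k) (Fin n) F :=
  fun a b => (G a b).coeff i

lemma wt0_eq {F : Type*} [Field F] {n : ℕ} (a : Fin n → F) (p : Polynomial F)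
    (hp : p.coeff 0 ≠ 0) :
    wtTrunc 0 (p • (fun t : Fin n => 1 + Polynomial.C (a t) * Polynomial.X :
            Fin n → Polynomial F)) = n := by
  unfold wtTrunc
  have : {q : ℕ × Fin n | q.1 ≤ 0 ∧ ((p • (fun t : Fin n => 1 + Polynomial.C (a t) * Polynomial.X :
            Fin n → Polynomial F)) q.2).coeff q.1 ≠ 0} = (fun t : Fin n => ((0:ℕ), t)) '' Set.univ := by
    ext ⟨i, t⟩
    simp only [Set.mem_setOf_eq, Set.image_univ, Set.mem_range, Prod.mk.injEq]
    constructor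
    · rintro ⟨h, -⟩
      exact ⟨t, by omega, rfl⟩
    · rintro ⟨y, rfl, rfl⟩
      simp [mul_coeff_zero, hp]
  rw [this, Set.ncard_image_of_injective _ (fun x y h => by simpa using h)]
  simp [Set.ncard_univ]

lemma wt1_eq {F : Type*} [Field F] {n : ℕ} (a : Fin n → F) (p : Polynomial F)
    (hp : p.coeff 0 ≠ 0) :
    wtTrunc 1 (p • (fun t : Fin n => 1 + Polynomial.C (a t) * Polynomial.X :
            Fin n → Polynomial F)) + {t : Fin n | p.coeff 1 + p.coeff 0 * a t = 0}.ncard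
      = 2 * n := by
  unfold wtTrunc
  have : {q : ℕ × Fin n | q.1 ≤ 1 ∧ ((p • (fun t : Fin n => 1 + Polynomial.C (a t) * Polynomial.X :
            Fin n → Polynomial F)) q.2).coeff q.1 ≠ 0} = (fun t : Fin n => ((0:ℕ), t)) '' Set.univ ∪
            (fun t : Fin n => ((1:ℕ), t)) '' {t : Fin n | p.coeff 1 + p.coeff 0 * a t = 0}ᶜ := by
    ext ⟨i, t⟩
    have h1 : (p * (1 + C (a t) * X)).coeff 1 = p.coeff 1 + p.coeff 0 * a t := by
      rw [mul_add, mul_one, ← mul_assoc, coeff_add, coeff_mul_X, coeff_mul_C]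
    have h0 : (p * (1 + C (a t) * X)).coeff 0 = p.coeff 0 := by
      simp [mul_coeff_zero]
    simp only [Set.mem_setOf_eq, Set.image_univ, Set.mem_range, Prod.mk.injEq, Set.mem_union,
      Set.mem_image, Set.mem_compl_iff, Pi.smul_apply, smul_eq_mul]
    constructor
    · rintro ⟨h, h'⟩
      obtain rfl | rfl : i = 0 ∨ i = 1 := by omega
      · exact Or.inl ⟨t, rfl, rfl⟩
      · exact Or.inr ⟨t, by rwa [← h1], rfl, rfl⟩
    · rintro (⟨y, rfl, rfl⟩ | ⟨y, hy, rfl, rfl⟩)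
      · rw [h0]; exact ⟨by omega, hp⟩
      · rw [h1]; exact ⟨le_rfl, hy⟩
  rw [this, Set.ncard_union_eq _ (Set.toFinite _) (Set.toFinite _),
    Set.ncard_image_of_injective _ (fun x y h => by simpa using h),
    Set.ncard_image_of_injective _ (fun x y h => by simpa using h)]
  · have := Set.ncard_add_ncard_compl {t : Fin n | p.coeff 1 + p.coeff 0 * a t = 0}
    simp only [Set.ncard_univ, Nat.card_eq_fintype_card, Fintype.card_fin] at this ⊢
    omega
  · rw [Set.disjoint_left]
    rintro ⟨i, t⟩ ⟨y, -, h⟩ ⟨z, -, h'⟩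
    simp at h h'
    omega

lemma colDist_set {F : Type*} [Field F] {n : ℕ} (hn : 3 ≤ n) (a : Fin n → F) (j : ℕ) :
    colDist (Submodule.span (Polynomial F)
          {(fun t : Fin n => 1 + Polynomial.C (a t) * Polynomial.X :
            Fin n → Polynomial F)}) j = sInf {w | ∃ p : Polynomial F, p.coeff 0 ≠ 0 ∧
      w = wtTrunc j (p • (fun t : Fin n => 1 + Polynomial.C (a t) * Polynomial.X :
            Fin n → Polynomial F))} := by
  unfold colDist
  congr 1
  ext w
  have key : ∀ p : Polynomial F, (fun t => ((p • (fun t : Fin n => 1 + Polynomial.C (a t) * Polynomial.X :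
            Fin n → Polynomial F)) t).coeff 0) ≠ (0 : Fin n → F) ↔ p.coeff 0 ≠ 0 := by
    intro p
    rw [not_iff_not, funext_iff]
    simp only [Pi.smul_apply, smul_eq_mul, mul_coeff_zero]
    simp only [coeff_add, coeff_one_zero, mul_coeff_zero, coeff_X_zero, mul_zero, add_zero, mul_one,
      Pi.zero_apply]
    exact ⟨fun h => h ⟨0, by omega⟩, fun h _ => h⟩
  constructor
  · rintro ⟨v, hv, h, rfl⟩
    obtain ⟨p, rfl⟩ := Submodule.mem_span_singleton.1 hv
    exact ⟨p, (key p).1 h, rfl⟩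
  · rintro ⟨p, h, rfl⟩
    exact ⟨_, Submodule.mem_span_singleton.2 ⟨p, rfl⟩, (key p).2 h, rfl⟩

theorem stmt16 {F : Type*} [Field F] [Fintype F] {n : ℕ} (hn : 3 ≤ n)
    (a : Fin n → F) :
    Function.Injective a ↔
      (colDist (Submodule.span (Polynomial F)
          {(fun t : Fin n => 1 + Polynomial.C (a t) * Polynomial.X :
            Fin n → Polynomial F)}) 0 = n ∧
       colDist (Submodule.span (Polynomial F)
          {(fun t : Fin n => 1 + Polynomial.C (a t) * Polynomial.X :
            Fin n → Polynomial F)}) 1 = 2 * n - 1) := by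
  rw [colDist_set hn, colDist_set hn]
  have q0 : ∀ i : Fin n, (1 - C (a i) * X : Polynomial F).coeff 0 = 1 := by
    intro i; simp [mul_coeff_zero]
  have q1 : ∀ i : Fin n, (1 - C (a i) * X : Polynomial F).coeff 1 = - a i := by
    intro i; simp [coeff_one]
  have q0' : ∀ i : Fin n, (1 - C (a i) * X : Polynomial F).coeff 0 ≠ 0 := by
    intro i; simp [q0 i]
  constructor
  · intro ha
    have i0 : Fin n := ⟨0, by omega⟩
    constructor
    · apply IsLeast.csInf_eq
      refine ⟨⟨_, q0' i0, (wt0_eq a _ (q0' i0)).symm⟩, ?_⟩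
      rintro w ⟨p, hp, rfl⟩
      rw [wt0_eq a p hp]
    · apply IsLeast.csInf_eq
      constructor
      · refine ⟨_, q0' i0, ?_⟩
        have h := wt1_eq a _ (q0' i0)
        have : {t : Fin n | (1 - C (a i0) * X : Polynomial F).coeff 1 +
            (1 - C (a i0) * X : Polynomial F).coeff 0 * a t = 0} = {i0} := by
          ext t
          rw [q0, q1]
          simp only [Set.mem_setOf_eq, Set.mem_singleton_iff, one_mul]
          rw [neg_add_eq_zero]
          exact ⟨fun h => (ha h).symm, fun h => by rw [h]⟩
        rw [this, Set.ncard_singleton] at h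
        omega
      · rintro w ⟨p, hp, rfl⟩
        have h := wt1_eq a p hp
        have : {t : Fin n | p.coeff 1 + p.coeff 0 * a t = 0}.ncard ≤ 1 := by
          rw [Set.ncard_le_one]
          intro s hs t ht
          simp only [Set.mem_setOf_eq] at hs ht
          exact ha (mul_left_cancel₀ hp (add_left_cancel (hs.trans ht.symm)))
        omega
  · rintro ⟨-, h1⟩ i j hij
    by_contra hne
    have h := wt1_eq a _ (q0' i)
    have hle := Nat.sInf_le (s := {w | ∃ p : Polynomial F, p.coeff 0 ≠ 0 ∧
      w = wtTrunc 1 (p • (fun t : Fin n => 1 + Polynomial.C (a t) * Polynomial.X :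
            Fin n → Polynomial F))}) ⟨_, q0' i, rfl⟩
    have : 1 < {t : Fin n | (1 - C (a i) * X : Polynomial F).coeff 1 +
            (1 - C (a i) * X : Polynomial F).coeff 0 * a t = 0}.ncard := by
      rw [Set.one_lt_ncard]
      exact ⟨i, by simp only [Set.mem_setOf_eq, q0, q1]; ring,
        j, by simp only [Set.mem_setOf_eq, q0, q1, hij]; ring, hne⟩
    omega
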